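/- arXiv:2011.00128 — 2 statements merged into one kernel-verified Lean document; each statement's English description precedes it below -/
import Mathlib

section
/- (Type-2 rows of the transition matrix of the transvection Markov chain on edge orbits.) Let a, b ∈ F with a ≠ 0, b ≠ 0 and Tr(a*b) = 0, and set u := (a, 0), v := (0, b) (a representative type-2 edge with orbit invariant a*b ≠ 0). Then for every y ∈ F with Tr(y) = 0, the number of h ∈ F × F with h ≠ (0,0) and det(τ_h(u), τ_h(v)) = y equals 4^(m−1) + 3·2^(m−1) − 1 if y = a*b, and equals 3·2^(m−1) if y ≠ a*b. (In particular, taking y = 0, exactly 3·2^(m−1) = 3N/2 transvections send a type-2 edge into the type-1 edges, so each row sum of the block R is 6N.) -/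
open scoped Classical

/-!
Let `T` be the trace, or any surjective `𝔽₂`-linear functional. Since `⟨x, h⟩ = T (det(x, h))`, the
coordinates `(s, t) = (det(u, h), det(v, h))` of `h`, which are bijective by Cramer's rule when
`det(u, v)` is invertible, give `det(τ_h u, τ_h v) = det(u, v) + T t • s + T s • t`.
It remains to count the pairs with `T t • s + T s • t = z`, where `z = y - det(u, v)` has `T z = 0`.
For each of the three nonzero values of `(T s, T t)` the equation becomes one of `t = z`, `s = z`,
`s + t = z`, with solutions parametrized by the fiber of `T` over `1`; the value `(0, 0)`
contributes all of `ker T × ker T` if `z = 0` and nothing otherwise.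
-/

open Finset

theorem card_mul_card_fiber_of_surjective {G H F : Type*} [AddGroup G] [Fintype G] [AddGroup H]
    [Fintype H] [DecidableEq H] [FunLike F G H] [AddMonoidHomClass F G H] {f : F}
    (hf : Function.Surjective f) (b : H) :
    Fintype.card H * #{x | f x = b} = Fintype.card G := by
  calc Fintype.card H * #{x | f x = b} = ∑ c : H, #{x | f x = c} := by
        rw [sum_congr rfl fun c _ ↦ AddMonoidHom.card_fiber_eq_of_mem_range f (hf c) (hf b),
          sum_const, card_univ, smul_eq_mul]
    _ = Fintype.card G := by
        rw [← card_univ, ← card_eq_sum_card_fiberwise fun x _ ↦ mem_univ (f x)]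

section Counting

variable {A : Type*} [AddCommGroup A] [Module (ZMod 2) A] [Fintype A] {T : A →ₗ[ZMod 2] ZMod 2}

theorem card_fiber_eq_card_div_two (hT : Function.Surjective T) (c : ZMod 2) :
    #{p | T p = c} = Fintype.card A / 2 := by
  have := card_mul_card_fiber_of_surjective hT c
  rw [ZMod.card] at this
  lia

theorem card_smul_add_smul_eq_of_apply_eq_zero (hT : Function.Surjective T) (z : A) :
    #{x : A × A | (T x.1, T x.2) = 0 ∧ T x.2 • x.1 + T x.1 • x.2 = z} =
      if z = 0 then (Fintype.card A / 2) ^ 2 else 0 := by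
  split_ifs with hz
  · have : ({x : A × A | (T x.1, T x.2) = 0 ∧ T x.2 • x.1 + T x.1 • x.2 = z} : Finset (A × A)) =
        ({p | T p = 0} : Finset A) ×ˢ ({p | T p = 0} : Finset A) := by
      ext
      simp +contextual [hz]
    rw [this, card_product, card_fiber_eq_card_div_two hT, sq]
  · rw [card_eq_zero, filter_eq_empty_iff]
    simp +contextual [Ne.symm hz]

theorem card_smul_add_smul_eq_of_apply_ne_zero (hT : Function.Surjective T) {z : A} (hz : T z = 0)
    {c : ZMod 2 × ZMod 2} (hc : c ≠ 0) :
    #{x : A × A | (T x.1, T x.2) = c ∧ T x.2 • x.1 + T x.1 • x.2 = z} = Fintype.card A / 2 := by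
  have cases_c : c = (1, 0) ∨ c = (0, 1) ∨ c = (1, 1) := by decide +revert
  let solutions : Finset (A × A) := {x | (T x.1, T x.2) = c ∧ T x.2 • x.1 + T x.1 • x.2 = z}
  let fiber : Finset A := {p | T p = 1}
  have card_fiber : #fiber = Fintype.card A / 2 := card_fiber_eq_card_div_two hT 1
  change #solutions = Fintype.card A / 2
  rcases cases_c with rfl | rfl | rfl
  · have : solutions = fiber ×ˢ {z} := by
      ext ⟨p, q⟩
      simp only [solutions, fiber, mem_filter_univ, mem_product, mem_singleton, Prod.mk.injEq]
      constructor <;> simp +contextual [hz]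
    rw [this, card_product, card_singleton, mul_one, card_fiber]
  · have : solutions = {z} ×ˢ fiber := by
      ext ⟨p, q⟩
      simp only [solutions, fiber, mem_filter_univ, mem_product, mem_singleton, Prod.mk.injEq]
      constructor <;> simp +contextual [hz]
    rw [this, card_product, card_singleton, one_mul, card_fiber]
  · have add_eq_iff (p q : A) : p + q = z ↔ q = p + z := by
      rw [← eq_sub_iff_add_eq', ZModModule.sub_eq_add, add_comm]
    have : solutions = fiber.image fun p ↦ (p, p + z) := by
      ext ⟨p, q⟩
      simp only [solutions, fiber, mem_filter_univ, mem_image, Prod.mk.injEq]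
      constructor
      · simp +contextual [add_eq_iff]
      · rintro ⟨p, hp, rfl, rfl⟩
        simp [hp, hz, add_eq_iff]
    rw [this, card_image_of_injective _ fun p q h ↦ (Prod.mk.inj h).1, card_fiber]

theorem card_smul_add_smul_eq (hT : Function.Surjective T) {z : A} (hz : T z = 0) :
    #{x : A × A | T x.2 • x.1 + T x.1 • x.2 = z} =
      (if z = 0 then (Fintype.card A / 2) ^ 2 else 0) + 3 * (Fintype.card A / 2) := by
  have card_compl_zero : #({0}ᶜ : Finset (ZMod 2 × ZMod 2)) = 3 := rfl
  rw [card_eq_sum_card_fiberwise fun x _ ↦ mem_univ (T x.1, T x.2)]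
  simp only [filter_filter, and_comm (b := _ = (_ : ZMod 2 × ZMod 2))]
  rw [Fintype.sum_eq_add_sum_compl 0, card_smul_add_smul_eq_of_apply_eq_zero hT,
    sum_congr rfl fun c hc ↦ card_smul_add_smul_eq_of_apply_ne_zero hT hz (by simpa using hc),
    sum_const, smul_eq_mul, card_compl_zero]

theorem card_ne_zero_smul_add_smul_eq (hT : Function.Surjective T) {z : A} (hz : T z = 0) :
    #{x : A × A | x ≠ 0 ∧ T x.2 • x.1 + T x.1 • x.2 = z} =
      if z = 0 then (Fintype.card A / 2) ^ 2 + 3 * (Fintype.card A / 2) - 1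
      else 3 * (Fintype.card A / 2) := by
  have zero_mem_iff : (0 : A × A) ∈ ({x | T x.2 • x.1 + T x.1 • x.2 = z} : Finset (A × A)) ↔
      z = 0 := by
    simp [eq_comm]
  rw [← filter_filter, filter_ne', filter_erase, card_erase_eq_ite,
    card_smul_add_smul_eq hT hz]
  simp only [zero_mem_iff]
  split_ifs <;> simp

end Counting

section Transvection

/-- The determinant of the matrix with rows `u` and `v`, written with the sign convention of
characteristic two. -/
def pairDet {R : Type*} [CommRing R] (u v : R × R) : R := u.1 * v.2 + u.2 * v.1

variable {R : Type*} [CommRing R] [Algebra (ZMod 2) R]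

/-- The transvection `x ↦ x + ⟨x, h⟩ • h` along `h` for the `𝔽₂`-valued symplectic form
`⟨x, h⟩ = T (det(x, h))`. -/
def symplecticTransvection (T : R →ₗ[ZMod 2] ZMod 2) (h x : R × R) : R × R :=
  x + T (pairDet x h) • h

theorem pairDet_smul_eq_add (u v h : R × R) :
    pairDet u v • h = pairDet v h • u + pairDet u h • v := by
  ext <;> simp only [pairDet, Prod.smul_fst, Prod.smul_snd, Prod.fst_add, Prod.snd_add, smul_eq_mul]
  · linear_combination -ZModModule.add_self (u.1 * v.1 * h.2)
  · linear_combination -ZModModule.add_self (u.2 * v.2 * h.1)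

theorem pairDet_coordinates_bijective [Finite R] {u v : R × R} (huv : IsUnit (pairDet u v)) :
    Function.Bijective fun h ↦ (pairDet u h, pairDet v h) := by
  refine Finite.injective_iff_bijective.mp fun h k hhk ↦ huv.smul_left_cancel.mp ?_
  obtain ⟨hu, hv⟩ := Prod.mk.inj hhk
  rw [pairDet_smul_eq_add u v h, pairDet_smul_eq_add u v k, hu, hv]

theorem pairDet_symplecticTransvection (T : R →ₗ[ZMod 2] ZMod 2) (u v h : R × R) :
    pairDet (symplecticTransvection T h u) (symplecticTransvection T h v) =
      pairDet u v + (T (pairDet v h) • pairDet u h + T (pairDet u h) • pairDet v h) := by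
  simp only [symplecticTransvection]
  generalize T (pairDet u h) = α
  generalize T (pairDet v h) = β
  simp only [pairDet, Prod.fst_add, Prod.snd_add, Prod.smul_fst, Prod.smul_snd]
  simp only [Algebra.smul_def]
  linear_combination
    ZModModule.add_self (algebraMap (ZMod 2) R α * algebraMap (ZMod 2) R β * h.1 * h.2)

end Transvection

theorem stmt_15_general {R : Type*} [CommRing R] [Algebra (ZMod 2) R] [Finite R]
    {T : R →ₗ[ZMod 2] ZMod 2} (hT : Function.Surjective T) {u v : R × R}
    (huv : IsUnit (pairDet u v)) (hTuv : T (pairDet u v) = 0) {y : R} (hy : T y = 0) :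
    Nat.card {h : R × R //
      h ≠ 0 ∧ pairDet (symplecticTransvection T h u) (symplecticTransvection T h v) = y} =
    if y = pairDet u v then (Nat.card R / 2) ^ 2 + 3 * (Nat.card R / 2) - 1
    else 3 * (Nat.card R / 2) := by
  have := Fintype.ofFinite R
  have hz : T (y - pairDet u v) = 0 := by rw [map_sub, hy, hTuv, sub_zero]
  let coords : R × R ≃ R × R := .ofBijective _ (pairDet_coordinates_bijective huv)
  have coords_zero : coords 0 = 0 := by simp [coords, pairDet]
  simp_rw [Nat.card_eq_fintype_card (α := R), ← sub_eq_zero (a := y),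
    ← card_ne_zero_smul_add_smul_eq hT hz, ← Fintype.card_subtype,
    ← Nat.card_eq_fintype_card]
  refine Nat.card_congr (coords.subtypeEquiv fun h ↦ and_congr ?_ ?_)
  · exact (coords.injective.ne_iff' coords_zero).symm
  · rw [pairDet_symplecticTransvection, ← eq_sub_iff_add_eq']
    rfl

theorem stmt_15 (m : ℕ) (hm : 1 ≤ m)
    (Tr : GaloisField 2 m → ZMod 2)
    (hTr : Tr = Algebra.trace (ZMod 2) (GaloisField 2 m))
    (τ : (GaloisField 2 m × GaloisField 2 m) →
      (GaloisField 2 m × GaloisField 2 m) →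
      (GaloisField 2 m × GaloisField 2 m))
    (hτ : ∀ h x, τ h x = x +
      (algebraMap (ZMod 2) (GaloisField 2 m) (Tr (x.1 * h.2 + x.2 * h.1))) • h)
    (det : (GaloisField 2 m × GaloisField 2 m) →
      (GaloisField 2 m × GaloisField 2 m) → GaloisField 2 m)
    (hdet : ∀ u v, det u v = u.1 * v.2 + u.2 * v.1)
    (a b : GaloisField 2 m) (ha : a ≠ 0) (hb : b ≠ 0) (hab : Tr (a * b) = 0)
    (y : GaloisField 2 m) (hy : Tr y = 0) :
    Nat.card {h : GaloisField 2 m × GaloisField 2 m //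
      h ≠ (0, 0) ∧ det (τ h (a, 0)) (τ h (0, b)) = y} =
    if y = a * b then 4 ^ (m - 1) + 3 * 2 ^ (m - 1) - 1
    else 3 * 2 ^ (m - 1) := by
  obtain rfl : τ = symplecticTransvection (Algebra.trace (ZMod 2) (GaloisField 2 m)) := by
    funext h x
    rw [hτ, hTr, algebraMap_smul]
    rfl
  obtain rfl : det = pairDet := funext₂ hdet
  have card_half : Nat.card (GaloisField 2 m) / 2 = 2 ^ (m - 1) := by
    rw [GaloisField.card 2 m (by lia), ← Nat.pow_pred_mul hm, Nat.mul_div_cancel _ two_pos]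
  subst hTr
  have det_ab : pairDet (a, 0) (0, b) = a * b := by simp [pairDet]
  have := stmt_15_general (Algebra.trace_surjective (ZMod 2) (GaloisField 2 m))
    (u := (a, 0)) (v := (0, b)) (by simp [det_ab, ha, hb]) (by rwa [det_ab]) hy
  rwa [det_ab, card_half, pow_right_comm] at this
end

section
/- (Type-1 rows of the transition matrix of the transvection Markov chain on edge orbits.) Let a, b ∈ F with a ≠ 0, b ≠ 0 and a ≠ b, and set u := (a, 0), v := (b, 0) (a representative type-1 edge). Then: (i) for every h ∈ F × F with h ≠ (0,0), det(τ_h(u), τ_h(v)) = 0 if and only if (τ_h(u), τ_h(v)) = (u, v) (a transvection never moves a type-1 edge to a different type-1 orbit); (ii) the number of h ≠ (0,0) with (τ_h(u), τ_h(v)) = (u, v) equals 4^(m−1) − 1 = (N² − 4)/4; consequently the number of h ≠ (0,0) with det(τ_h(u), τ_h(v)) ≠ 0 equals 3·4^(m−1) = 3N²/4. -/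
/-!
Let `B` be an alternating `L`-bilinear form, `φ : L → K` a nonzero `K`-linear functional and
`τ_h x = x + φ (B(x, h)) h`. On the line `L w` the transvected pair satisfies
`B (τ_h (a w)) (τ_h (b w)) = (β a - α b) B(w, h)` with `α = φ (a B(w, h))` and
`β = φ (b B(w, h))` in `K`. If `a, b` are independent over `K`, this vanishes exactly when
`α = β = 0`, which for `h ≠ 0` says that `τ_h` fixes both vectors. These are two independent
`K`-linear conditions on `h`, so their solutions form a subspace of codimension two. Over `𝔽₂`,
independence of `a, b` means that they are nonzero and distinct.
-/

open LinearMap (BilinForm)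
open Module

section CommonZeros

variable {K V ι : Type*} [Field K] [AddCommGroup V] [Module K V] [Module.Finite K V] [Fintype ι]
  {f : ι → Dual K V}

theorem finrank_dualCoannihilator_span_range (hf : LinearIndependent K f) :
    finrank K (Submodule.span K (Set.range f)).dualCoannihilator =
      finrank K V - Fintype.card ι := by
  rw [← Subspace.finrank_add_finrank_dualCoannihilator_eq (Submodule.span K (Set.range f)),
    finrank_span_eq_card hf, Nat.add_sub_cancel_left]

theorem natCard_common_zeros (hf : LinearIndependent K f) :
    Nat.card {x // ∀ i, f i x = 0} = Nat.card K ^ (finrank K V - Fintype.card ι) := by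
  rw [← finrank_dualCoannihilator_span_range hf, ← Module.natCard_eq_pow_finrank]
  refine Nat.card_congr (Equiv.subtypeEquivRight fun x ↦ ?_)
  simp [← SetLike.mem_coe, Submodule.coe_dualCoannihilator_span]

theorem natCard_common_zeros_ne_zero [Finite K] (hf : LinearIndependent K f) :
    Nat.card {x // x ≠ 0 ∧ ∀ i, f i x = 0} =
      Nat.card K ^ (finrank K V - Fintype.card ι) - 1 := by
  have zero_mem : (0 : V) ∈ {x | ∀ i, f i x = 0} := by simp
  rw [← natCard_common_zeros hf]
  simp only [and_comm (a := _ ≠ (0 : V))]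
  exact Set.ncard_sdiff_singleton_of_mem zero_mem

theorem natCard_not_common_zeros [Finite K] (hf : LinearIndependent K f) :
    Nat.card {x // ¬ ∀ i, f i x = 0} =
      (Nat.card K ^ Fintype.card ι - 1) * Nat.card K ^ (finrank K V - Fintype.card ι) := by
  have : Finite V := Module.finite_of_finite K
  have card_le : Fintype.card ι ≤ finrank K V :=
    hf.fintype_card_le_finrank.trans_eq Subspace.dual_finrank_eq
  have card_compl : Nat.card {x // ¬ ∀ i, f i x = 0} =
      Nat.card V - Nat.card {x // ∀ i, f i x = 0} :=
    Set.ncard_compl {x | ∀ i, f i x = 0}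
  rw [card_compl, natCard_common_zeros hf, Module.natCard_eq_pow_finrank (K := K), Nat.sub_mul,
    one_mul, ← pow_add, Nat.add_sub_cancel' card_le]

end CommonZeros

section FormTransvection

variable {K V : Type*} [CommRing K] [AddCommGroup V] [Module K V]

/-- The map `x ↦ x + ω x h • h` attached to a bilinear form `ω`: the symplectic transvection along
`h` when `ω` is alternating. -/
def formTransvection (ω : BilinForm K V) (h : V) : V →ₗ[K] V :=
  LinearMap.transvection (ω.flip h) h

theorem formTransvection_apply (ω : BilinForm K V) (h x : V) :
    formTransvection ω h x = x + ω x h • h :=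
  rfl

theorem formTransvection_apply_eq_self_iff [IsDomain K] [IsTorsionFree K V] {ω : BilinForm K V}
    {h : V} (hh : h ≠ 0) {x : V} : formTransvection ω h x = x ↔ ω x h = 0 := by
  rw [formTransvection_apply, add_eq_left, smul_eq_zero_iff_left hh]

end FormTransvection

section TransferForm

variable {K L V : Type*} [CommRing K] [CommRing L] [Algebra K L] [AddCommGroup V]
  [Module K V] [Module L V] [IsScalarTower K L V]

/-- The `K`-bilinear form `φ ∘ B` obtained from an `L`-bilinear form `B` and a `K`-linear functional
`φ` on `L`. For `φ` the trace and `B` the determinant it is the symplectic pairing `⟨x, h⟩`. -/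
def transferForm (φ : L →ₗ[K] K) (B : BilinForm L V) : BilinForm K V :=
  (B.restrictScalars₁₂ K K).compr₂ φ

theorem transferForm_apply (φ : L →ₗ[K] K) (B : BilinForm L V) (x y : V) :
    transferForm φ B x y = φ (B x y) :=
  rfl

theorem apply_formTransvection_transferForm_smul (φ : L →ₗ[K] K) {B : BilinForm L V}
    (hB : B.IsAlt) (w h : V) (a b : L) :
    B (formTransvection (transferForm φ B) h (a • w))
        (formTransvection (transferForm φ B) h (b • w)) =
      (transferForm φ B (b • w) h • a - transferForm φ B (a • w) h • b) * B w h := by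
  simp only [formTransvection_apply, ← algebraMap_smul L (_ : K) (_ : V), map_add, map_smul,
    LinearMap.add_apply, LinearMap.smul_apply, hB.self_eq_zero, ← hB.neg_eq h w, smul_eq_mul,
    Algebra.smul_def]
  ring

theorem apply_formTransvection_transferForm_smul_eq_zero_iff [NoZeroDivisors L]
    (φ : L →ₗ[K] K) {B : BilinForm L V} (hB : B.IsAlt) (w h : V) {a b : L}
    (hab : LinearIndependent K ![a, b]) :
    B (formTransvection (transferForm φ B) h (a • w))
        (formTransvection (transferForm φ B) h (b • w)) = 0 ↔
      transferForm φ B (a • w) h = 0 ∧ transferForm φ B (b • w) h = 0 := by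
  rw [apply_formTransvection_transferForm_smul φ hB, mul_eq_zero]
  constructor
  · rintro (combination_eq_zero | orthogonal)
    · rw [sub_eq_add_neg, ← neg_smul] at combination_eq_zero
      obtain ⟨b_orthogonal, neg_a_orthogonal⟩ :=
        LinearIndependent.pair_iff.mp hab _ _ combination_eq_zero
      exact ⟨neg_eq_zero.mp neg_a_orthogonal, b_orthogonal⟩
    · simp [transferForm_apply, orthogonal]
  · rintro ⟨ha, hb⟩
    simp [ha, hb]

end TransferForm

theorem linearIndependent_transferForm_smul {K L V ι : Type*} [CommRing K] [Field L] [Algebra K L]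
    [AddCommGroup V] [Module K V] [Module L V] [IsScalarTower K L V] {φ : L →ₗ[K] K} (hφ : φ ≠ 0)
    {B : BilinForm L V} {w : V} (hw : B w ≠ 0) {a : ι → L} (ha : LinearIndependent K a) :
    LinearIndependent K fun i ↦ transferForm φ B (a i • w) := by
  let scale : L →ₗ[K] Dual K V :=
    transferForm φ B ∘ₗ (LinearMap.toSpanSingleton L V w).restrictScalars K
  refine ha.map' scale (LinearMap.ker_eq_bot'.mpr fun c hc ↦ ?_)
  by_contra c_ne_zero
  obtain ⟨z, hz⟩ := DFunLike.ne_iff.mp hφ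
  obtain ⟨h, hh⟩ := LinearMap.surjective hw (c⁻¹ * z)
  apply hz
  simpa [scale, transferForm_apply, hh, c_ne_zero] using LinearMap.congr_fun hc h

theorem linearIndependent_pair_zmod_two {V : Type*} [AddCommGroup V] [Module (ZMod 2) V] {x y : V}
    (hx : x ≠ 0) (hy : y ≠ 0) (hxy : x ≠ y) : LinearIndependent (ZMod 2) ![x, y] := by
  rw [LinearIndependent.pair_iff' hx]
  intro c
  obtain rfl | rfl : c = 0 ∨ c = 1 := by decide +revert
  · simpa using hy.symm
  · simpa using hxy

section DetForm

variable (R : Type*) [CommRing R]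

/-- The determinant of the matrix with rows `u` and `v`, as a bilinear form on `R × R`. -/
def detForm : BilinForm R (R × R) :=
  (LinearMap.mul R R).compl₁₂ (.fst R R R) (.snd R R R) -
    (LinearMap.mul R R).compl₁₂ (.snd R R R) (.fst R R R)

variable {R}

theorem detForm_apply (u v : R × R) : detForm R u v = u.1 * v.2 - u.2 * v.1 :=
  rfl

theorem isAlt_detForm : (detForm R).IsAlt := fun u ↦ by
  rw [detForm_apply, mul_comm, sub_self]

theorem detForm_one_zero_ne_zero [Nontrivial R] : detForm R (1, 0) ≠ 0 :=
  DFunLike.ne_iff.mpr ⟨(0, 1), by simp [detForm_apply]⟩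

theorem detForm_apply_of_charTwo [CharP R 2] (u v : R × R) :
    detForm R u v = u.1 * v.2 + u.2 * v.1 := by
  rw [detForm_apply, CharTwo.sub_eq_add]

end DetForm

theorem stmt_16_general {K L V : Type*} [Field K] [Finite K] [Field L] [Algebra K L]
    [AddCommGroup V] [Module K V] [Module L V] [IsScalarTower K L V] [Module.Finite K V]
    {φ : L →ₗ[K] K} (hφ : φ ≠ 0) {B : BilinForm L V} (hB : B.IsAlt) {w : V} (hw : B w ≠ 0)
    {a b : L} (hab : LinearIndependent K ![a, b])
    {τ : V → V → V} (hτ : ∀ h x, τ h x = formTransvection (transferForm φ B) h x) :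
    (∀ h, h ≠ 0 →
      (B (τ h (a • w)) (τ h (b • w)) = 0 ↔ τ h (a • w) = a • w ∧ τ h (b • w) = b • w)) ∧
    Nat.card {h // h ≠ 0 ∧ τ h (a • w) = a • w ∧ τ h (b • w) = b • w} =
      Nat.card K ^ (finrank K V - 2) - 1 ∧
    Nat.card {h // h ≠ 0 ∧ B (τ h (a • w)) (τ h (b • w)) ≠ 0} =
      (Nat.card K ^ 2 - 1) * Nat.card K ^ (finrank K V - 2) := by
  have hf := linearIndependent_transferForm_smul hφ hw hab
  have fixes_iff (h : V) (hh : h ≠ 0) : (τ h (a • w) = a • w ∧ τ h (b • w) = b • w) ↔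
      ∀ i, transferForm φ B (![a, b] i • w) h = 0 := by
    simp [hτ, formTransvection_apply_eq_self_iff hh, Fin.forall_fin_two]
  have form_eq_zero_iff (h : V) : B (τ h (a • w)) (τ h (b • w)) = 0 ↔
      ∀ i, transferForm φ B (![a, b] i • w) h = 0 := by
    simp [hτ, apply_formTransvection_transferForm_smul_eq_zero_iff φ hB w h hab,
      Fin.forall_fin_two]
  have form_ne_zero_iff (h : V) : h ≠ 0 ∧ B (τ h (a • w)) (τ h (b • w)) ≠ 0 ↔
      ¬ ∀ i, transferForm φ B (![a, b] i • w) h = 0 := by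
    rw [ne_eq (B _ _), form_eq_zero_iff, and_iff_right_of_imp]
    rintro hne rfl
    simp at hne
  refine ⟨fun h hh ↦ (form_eq_zero_iff h).trans (fixes_iff h hh).symm, ?_, ?_⟩
  · simpa only [and_congr_right (fixes_iff _), Fintype.card_fin] using
      natCard_common_zeros_ne_zero hf
  · simpa only [form_ne_zero_iff, Fintype.card_fin] using natCard_not_common_zeros hf

theorem stmt_16 (m : ℕ) (hm : 1 ≤ m)
    (Tr : GaloisField 2 m → ZMod 2)
    (hTr : Tr = Algebra.trace (ZMod 2) (GaloisField 2 m))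
    (τ : (GaloisField 2 m × GaloisField 2 m) →
      (GaloisField 2 m × GaloisField 2 m) →
      (GaloisField 2 m × GaloisField 2 m))
    (hτ : ∀ h x, τ h x = x +
      (algebraMap (ZMod 2) (GaloisField 2 m) (Tr (x.1 * h.2 + x.2 * h.1))) • h)
    (det : (GaloisField 2 m × GaloisField 2 m) →
      (GaloisField 2 m × GaloisField 2 m) → GaloisField 2 m)
    (hdet : ∀ u v, det u v = u.1 * v.2 + u.2 * v.1)
    (a b : GaloisField 2 m) (ha : a ≠ 0) (hb : b ≠ 0) (hab : a ≠ b) :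
    (∀ h : GaloisField 2 m × GaloisField 2 m, h ≠ (0, 0) →
      (det (τ h (a, 0)) (τ h (b, 0)) = 0 ↔
        τ h (a, 0) = (a, 0) ∧ τ h (b, 0) = (b, 0))) ∧
    Nat.card {h : GaloisField 2 m × GaloisField 2 m //
      h ≠ (0, 0) ∧ τ h (a, 0) = (a, 0) ∧ τ h (b, 0) = (b, 0)} =
      4 ^ (m - 1) - 1 ∧
    Nat.card {h : GaloisField 2 m × GaloisField 2 m //
      h ≠ (0, 0) ∧ det (τ h (a, 0)) (τ h (b, 0)) ≠ 0} =
      3 * 4 ^ (m - 1) := by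
  have transvection_eq (h x) : τ h x = formTransvection
      (transferForm (Algebra.trace (ZMod 2) (GaloisField 2 m)) (detForm _)) h x := by
    rw [hτ, hTr, algebraMap_smul, formTransvection_apply, transferForm_apply,
      detForm_apply_of_charTwo]
  have finrank_eq : finrank (ZMod 2) (GaloisField 2 m × GaloisField 2 m) - 2 = 2 * (m - 1) := by
    rw [finrank_prod, GaloisField.finrank 2 (Nat.one_le_iff_ne_zero.mp hm)]
    omega
  have general := stmt_16_general (Algebra.trace_ne_zero (ZMod 2) (GaloisField 2 m)) isAlt_detForm
    detForm_one_zero_ne_zero (linearIndependent_pair_zmod_two ha hb hab) transvection_eq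
  simp only [finrank_eq, Nat.card_zmod, pow_mul, Prod.smul_mk, smul_eq_mul, mul_one, mul_zero,
    detForm_apply_of_charTwo, ← hdet] at general
  exact general
end
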